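/- Every f₄ ∈ Y_{n₁,n₂,n₃} can be represented in the normalized form f₄(t) = c^(4)·t + b^(4) + A^(4)·σ( A^(3)·σ( A^(2)·σ(t·𝟙 + b^(1)) + t·s^(2) + b^(2) ) + t·s^(3) + b^(3) ) with sign vectors s^(2) ∈ {−1, 0, 1}^{n₂} and s^(3) ∈ {−1, 0, 1}^{n₃}, 𝟙 = (1, …, 1)ᵀ ∈ ℝ^{n₁}, and n₁ + (n₁+1)·n₂ + (n₂+1)·n₃ + n₃ + 2 real parameters c^(4), b^(4), A^(4) ∈ ℝ^{1×n₃}, A^(3) ∈ ℝ^{n₃×n₂}, A^(2) ∈ ℝ^{n₂×n₁}, b^(1) ∈ ℝ^{n₁}, b^(2) ∈ ℝ^{n₂}, b^(3) ∈ ℝ^{n₃}. Moreover, these real parameters are independent: for any one of them, the class of functions representable with that parameter fixed to be zero is a proper subset of Y_{n₁,n₂,n₃}. -/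

import Mathlib

/-- The ReLU function `σ(x) = max(x,0)`. -/
noncomputable def relu (x : ℝ) : ℝ := max x 0

/-- `f` belongs to the three-hidden-layer ReLU network class `Y_{n₁,n₂,n₃}`. -/
def IsReLU3 (n1 n2 n3 : ℕ) (f : ℝ → ℝ) : Prop :=
  ∃ (a1 b1 : Fin n1 → ℝ) (a2 : Fin n2 → Fin n1 → ℝ) (c2 b2 : Fin n2 → ℝ)
    (a3 : Fin n3 → Fin n2 → ℝ) (c3 b3 : Fin n3 → ℝ) (a4 : Fin n3 → ℝ) (c4 b4 : ℝ),
    ∀ t, f t = c4 * t + b4 +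
      ∑ r, a4 r * relu
        ((∑ j, a3 r j * relu ((∑ k, a2 j k * relu (a1 k * t + b1 k)) + c2 j * t + b2 j))
          + c3 r * t + b3 r)

/-- Parameters of the normalized three-hidden-layer model: the
`n₁ + (n₁+1)n₂ + (n₂+1)n₃ + n₃ + 2` real parameters `c⁴, b⁴, A⁴, A³, A², b¹, b², b³`
together with the sign vectors `s², s³`. -/
structure NParams3 (n1 n2 n3 : ℕ) where
  c4 : ℝ
  b4 : ℝ
  a4 : Fin n3 → ℝ
  a3 : Fin n3 → Fin n2 → ℝ
  a2 : Fin n2 → Fin n1 → ℝ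
  b1 : Fin n1 → ℝ
  b2 : Fin n2 → ℝ
  b3 : Fin n3 → ℝ
  s2 : Fin n2 → ℝ
  s3 : Fin n3 → ℝ

/-- `s²` and `s³` are sign vectors. -/
def NParams3.valid {n1 n2 n3 : ℕ} (p : NParams3 n1 n2 n3) : Prop :=
  (∀ j, p.s2 j = -1 ∨ p.s2 j = 0 ∨ p.s2 j = 1) ∧
  (∀ r, p.s3 r = -1 ∨ p.s3 r = 0 ∨ p.s3 r = 1)

/-- The function realized by the normalized parameters:
`t ↦ c⁴·t + b⁴ + A⁴·σ(A³·σ(A²·σ(t·𝟙 + b¹) + t·s² + b²) + t·s³ + b³)`. -/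
noncomputable def NParams3.fn {n1 n2 n3 : ℕ} (p : NParams3 n1 n2 n3) : ℝ → ℝ :=
  fun t => p.c4 * t + p.b4 +
    ∑ r, p.a4 r * relu
      ((∑ j, p.a3 r j * relu ((∑ k, p.a2 j k * relu (t + p.b1 k)) + p.s2 j * t + p.b2 j))
        + p.s3 r * t + p.b3 r)

/-- Index type enumerating the real parameters of the normalized model. -/
inductive PIdx3 (n1 n2 n3 : ℕ) where
  | c4 : PIdx3 n1 n2 n3
  | b4 : PIdx3 n1 n2 n3
  | a4 (r : Fin n3) : PIdx3 n1 n2 n3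
  | a3 (r : Fin n3) (j : Fin n2) : PIdx3 n1 n2 n3
  | a2 (j : Fin n2) (k : Fin n1) : PIdx3 n1 n2 n3
  | b1 (k : Fin n1) : PIdx3 n1 n2 n3
  | b2 (j : Fin n2) : PIdx3 n1 n2 n3
  | b3 (r : Fin n3) : PIdx3 n1 n2 n3

/-- Read off the real parameter with the given index. -/
def NParams3.get {n1 n2 n3 : ℕ} (p : NParams3 n1 n2 n3) : PIdx3 n1 n2 n3 → ℝ
  | .c4 => p.c4
  | .b4 => p.b4
  | .a4 r => p.a4 r
  | .a3 r j => p.a3 r j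
  | .a2 j k => p.a2 j k
  | .b1 k => p.b1 k
  | .b2 j => p.b2 j
  | .b3 r => p.b3 r

/-!
The real parameters are independent for a reason of transcendence degree. Suppose a network `p`
realizes so many activation patterns that its parameters can be recovered by field operations from
the affine pieces of its function (by comparing pieces whose patterns differ in a single unit),
hence from its values at rational points, and suppose that its `N` real parameters are
algebraically independent over `ℚ`. If `p'` represents the same function, then these values lie in
the field generated by the `N` real parameters of `p'`, which therefore contains `N` algebraically
independent numbers. So the parameters of `p'` are algebraically independent too; in particular
none of them vanishes.

Realizing these patterns is an open condition and algebraically independent families are dense, so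
it suffices to exhibit one such network: one whose layers are zigzags.
-/

open Filter Set
open scoped Topology

theorem algebraicIndependent_of_adjoin_range_eq_top {F E ι : Type*} [Field F] [Field E]
    [Algebra F E] [Finite ι] {x y : ι → E} (hx : AlgebraicIndependent F x)
    (hy : IntermediateField.adjoin F (range y) = ⊤) : AlgebraicIndependent F y := by
  have : Algebra.IsAlgebraic (Algebra.adjoin F (range y)) E := by
    rw [← IntermediateField.isAlgebraic_adjoin_iff_top, hy]
    infer_instance
  exact (Algebra.IsAlgebraic.isTranscendenceBasis_of_lift_le_trdeg_of_finite F y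
    hx.lift_cardinalMk_le_trdeg).1

theorem algebraicIndependent_of_mem_adjoin {F E ι : Type*} [Field F] [Field E] [Algebra F E]
    [Finite ι] {x y : ι → E} (hx : AlgebraicIndependent F x)
    (h : ∀ i, x i ∈ IntermediateField.adjoin F (range y)) : AlgebraicIndependent F y := by
  let L := IntermediateField.adjoin F (range y)
  let x' : ι → L := fun i => ⟨x i, h i⟩
  let y' : ι → L := fun i => ⟨y i, IntermediateField.subset_adjoin F _ (mem_range_self i)⟩
  have hx' : AlgebraicIndependent F x' := (L.val.algebraicIndependent_iff L.val.injective).1 hx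
  have hy'_top : IntermediateField.adjoin F (range y') = ⊤ := by
    apply IntermediateField.map_injective L.val
    rw [IntermediateField.adjoin_map, ← range_comp, ← AlgHom.fieldRange_eq_map,
      IntermediateField.fieldRange_val]
    rfl
  have hy' := algebraicIndependent_of_adjoin_range_eq_top hx' hy'_top
  exact (L.val.algebraicIndependent_iff L.val.injective (x := y')).2 hy'

theorem countable_algebraAdjoin (R : Type*) {A : Type*} [CommSemiring R] [Countable R]
    [Semiring A] [Algebra R A] {s : Set A} (hs : s.Countable) : Countable (Algebra.adjoin R s) := by
  rw [← Cardinal.mk_le_aleph0_iff, ← Cardinal.lift_le_aleph0]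
  exact (Algebra.lift_cardinalMk_adjoin_le R s).trans (by simp [hs])

theorem dense_algebraicIndependent (R ι : Type*) [CommRing R] [IsDomain R] [Countable R]
    [Algebra R ℝ] [FaithfulSMul R ℝ] [Finite ι] :
    Dense {x : ι → ℝ | AlgebraicIndependent R x} := by
  induction ι using Finite.induction_empty_option with
  | of_equiv e h =>
    let φ := Homeomorph.piCongrLeft (Y := fun _ => ℝ) e
    refine (φ.surjective.denseRange.dense_image φ.continuous h).mono ?_
    rintro _ ⟨x, hx, rfl⟩
    exact (algebraicIndependent_equiv' e (by ext; simp [φ])).1 hx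
  | h_empty =>
    exact fun x => subset_closure
      (algebraicIndependent_empty_type_iff.2 (FaithfulSMul.algebraMap_injective R ℝ))
  | h_option h =>
    refine Metric.dense_iff.2 fun x ε hε => ?_
    obtain ⟨y, hxy, hy⟩ := Metric.dense_iff.1 h (x ∘ some) ε hε
    have := countable_algebraAdjoin R (finite_range y).countable
    have htrans : Dense {a : ℝ | Transcendental (Algebra.adjoin R (range y)) a} :=
      (Algebraic.countable _ ℝ).dense_compl ℝ
    obtain ⟨a, hxa, ha⟩ := Metric.dense_iff.1 htrans (x none) ε hε
    refine ⟨fun o => o.elim a y, (dist_pi_lt_iff hε).2 ?_, (hy.option_iff_transcendental a).2 ha⟩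
    rintro (_ | i)
    exacts [hxa, (dist_pi_lt_iff hε).1 hxy i]

theorem relu_of_nonneg {x : ℝ} (h : 0 ≤ x) : relu x = x := max_eq_left h

theorem relu_of_nonpos {x : ℝ} (h : x ≤ 0) : relu x = 0 := max_eq_right h

theorem relu_neg (x : ℝ) : relu (-x) = relu x - x := by
  rcases le_total 0 x with h | h
  · rw [relu_of_nonneg h, relu_of_nonpos (neg_nonpos.2 h), sub_self]
  · rw [relu_of_nonpos h, relu_of_nonneg (neg_nonneg.2 h), zero_sub]

theorem relu_mul {m : ℝ} (hm : 0 ≤ m) (x : ℝ) : relu (m * x) = m * relu x := by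
  rw [relu, relu, mul_max_of_nonneg _ _ hm, mul_zero]

@[fun_prop]
theorem continuous_relu : Continuous relu := continuous_id.max continuous_const

theorem exists_relu_affine_eq (a b : ℝ) :
    ∃ α β γ δ : ℝ, ∀ t, relu (a * t + b) = α * relu (t + β) + γ * t + δ := by
  have factor (ha : a ≠ 0) (t : ℝ) : a * t + b = a * (t + b / a) := by field_simp
  rcases lt_trichotomy a 0 with ha | rfl | ha
  · refine ⟨-a, b / a, a, b, fun t => ?_⟩
    calc relu (a * t + b) = relu (-(-a * (t + b / a))) := by rw [factor ha.ne]; ring_nf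
      _ = -a * relu (t + b / a) + a * (t + b / a) := by
        rw [relu_neg, relu_mul (neg_nonneg.2 ha.le)]; ring
      _ = -a * relu (t + b / a) + a * t + b := by rw [← factor ha.ne, add_assoc]
  · exact ⟨0, 0, 0, relu b, fun t => by simp⟩
  · exact ⟨a, b / a, 0, 0, fun t => by rw [factor ha.ne', relu_mul ha.le]; ring⟩

theorem exists_eq_mul_sign (c : ℝ) :
    ∃ m s : ℝ, 0 < m ∧ (s = -1 ∨ s = 0 ∨ s = 1) ∧ c = m * s := by
  rcases lt_trichotomy c 0 with h | rfl | h
  · exact ⟨-c, -1, neg_pos.2 h, by simp, by simp⟩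
  · exact ⟨1, 0, one_pos, by simp, by simp⟩
  · exact ⟨c, 1, h, by simp, by simp⟩

theorem exists_relu_sum_eq {ι : Type*} [Fintype ι] (a : ι → ℝ) (c b : ℝ) :
    ∃ (m s b' : ℝ) (a' : ι → ℝ), (s = -1 ∨ s = 0 ∨ s = 1) ∧ ∀ (x : ι → ℝ) (t : ℝ),
      relu ((∑ i, a i * x i) + c * t + b) = m * relu ((∑ i, a' i * x i) + s * t + b') := by
  obtain ⟨m, s, hm, hs, rfl⟩ := exists_eq_mul_sign c
  refine ⟨m, s, b / m, fun i => a i / m, hs, fun x t => ?_⟩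
  rw [← relu_mul hm.le, mul_add, mul_add, Finset.mul_sum]
  congr 1
  field_simp

theorem IsReLU3.exists_valid_eq_fn {n1 n2 n3 : ℕ} {f : ℝ → ℝ} (hf : IsReLU3 n1 n2 n3 f) :
    ∃ p : NParams3 n1 n2 n3, p.valid ∧ ∀ t, f t = p.fn t := by
  obtain ⟨a1, b1, a2, c2, b2, a3, c3, b3, a4, c4, b4, hf⟩ := hf
  choose α β γ δ h1 using fun k => exists_relu_affine_eq (a1 k) (b1 k)
  choose m2 s2 b2' a2' hs2 h2 using fun j =>
    exists_relu_sum_eq (fun k => a2 j k * α k) ((∑ k, a2 j k * γ k) + c2 j)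
      ((∑ k, a2 j k * δ k) + b2 j)
  choose m3 s3 b3' a3' hs3 h3 using fun r =>
    exists_relu_sum_eq (fun j => a3 r j * m2 j) (c3 r) (b3 r)
  refine ⟨⟨c4, b4, fun r => a4 r * m3 r, a3', a2', β, b2', b3', s2, s3⟩, ⟨hs2, hs3⟩,
    fun t => ?_⟩
  have layer2 (j : Fin n2) :
      relu ((∑ k, a2 j k * relu (a1 k * t + b1 k)) + c2 j * t + b2 j) =
        m2 j * relu ((∑ k, a2' j k * relu (t + β k)) + s2 j * t + b2' j) := by
    rw [← h2]
    simp only [h1, mul_add, Finset.sum_add_distrib, add_mul, Finset.sum_mul]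
    congr 1
    simp only [mul_assoc]
    ring
  simp only [hf, NParams3.fn, layer2, ← mul_assoc, h3]

section Membership

variable {S : Type*}

theorem relu_mem [SetLike S ℝ] [ZeroMemClass S ℝ] {K : S} {x : ℝ} (hx : x ∈ K) : relu x ∈ K := by
  rcases le_total 0 x with h | h
  · rwa [relu_of_nonneg h]
  · rw [relu_of_nonpos h]
    exact zero_mem K

theorem sign_mem {A : Type*} [Ring A] [SetLike S A] [SubringClass S A] {K : S} {s : A}
    (hs : s = -1 ∨ s = 0 ∨ s = 1) : s ∈ K := by
  rcases hs with rfl | rfl | rfl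
  exacts [neg_mem (one_mem K), zero_mem K, one_mem K]

variable {E : Type*} [Field E] [SetLike S E] [SubfieldClass S E] {K : S} {a b s : E}

theorem mem_of_mul_mem_left (ha : a ∈ K) (ha0 : a ≠ 0) (h : a * b ∈ K) : b ∈ K := by
  simpa [ha0] using mul_mem (inv_mem ha) h

theorem mem_of_forall_mul_affine_mem (hs : s ∈ K) (hs0 : s ≠ 0)
    (h : ∀ q : ℚ, a * (s * q + b) ∈ K) : a ∈ K := by
  refine mem_of_mul_mem_left hs hs0 ?_
  simpa [mul_add, mul_comm] using sub_mem (h 1) (h 0)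

end Membership

/-- The units with strictly positive preactivation `x i` are those in `e`; all others have
strictly negative preactivation. -/
def HasActiveSet {ι : Type*} (e : Finset ι) (x : ι → ℝ) : Prop :=
  (∀ i ∈ e, 0 < x i) ∧ ∀ i ∉ e, x i < 0

theorem HasActiveSet.sum_mul_relu {ι : Type*} [Fintype ι] {e : Finset ι} {x : ι → ℝ}
    (h : HasActiveSet e x) (c : ι → ℝ) : ∑ i, c i * relu (x i) = ∑ i ∈ e, c i * x i :=
  calc ∑ i, c i * relu (x i) = ∑ i ∈ e, c i * relu (x i) :=
        (Finset.sum_subset e.subset_univ fun i _ hi => by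
          rw [relu_of_nonpos (h.2 i hi).le, mul_zero]).symm
    _ = ∑ i ∈ e, c i * x i :=
        Finset.sum_congr rfl fun i hi => by rw [relu_of_nonneg (h.1 i hi).le]

theorem isOpen_setOf_hasActiveSet {X ι : Type*} [TopologicalSpace X] [Finite ι] (e : Finset ι)
    {f : X → ι → ℝ} (hf : ∀ i, Continuous fun x => f x i) :
    IsOpen {x | HasActiveSet e (f x)} := by
  simp only [HasActiveSet, ofPred_and, ofPred_forall]
  exact (isOpen_iInter_of_finite fun i => isOpen_iInter_of_finite fun _ =>
      isOpen_lt continuous_const (hf i)).inter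
    (isOpen_iInter_of_finite fun i => isOpen_iInter_of_finite fun _ =>
      isOpen_lt (hf i) continuous_const)

/-- Functions `ℝ → ℝ` of the form `t ↦ A * t + B`, the form of a network function on a region of
constant activation pattern. -/
def IsAffine (L : ℝ → ℝ) : Prop := ∃ A B : ℝ, ∀ t, L t = A * t + B

theorem isAffine_sum_mul_add {ι : Type*} (e : Finset ι) (c : ι → ℝ) {L : ι → ℝ → ℝ}
    (hL : ∀ i, IsAffine (L i)) (s b : ℝ) :
    IsAffine fun t => (∑ i ∈ e, c i * L i t) + s * t + b := by
  choose A B hL using hL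
  refine ⟨(∑ i ∈ e, c i * A i) + s, (∑ i ∈ e, c i * B i) + b, fun t => ?_⟩
  simp only [hL, mul_add, ← mul_assoc, Finset.sum_add_distrib, ← Finset.sum_mul]
  ring

theorem IsAffine.apply_mem {S : Type*} [SetLike S ℝ] [SubfieldClass S ℝ] {K : S} {L : ℝ → ℝ}
    (hL : IsAffine L) {x y z : ℝ} (hx : x ∈ K) (hy : y ∈ K) (hz : z ∈ K) (hxy : x ≠ y)
    (hLx : L x ∈ K) (hLy : L y ∈ K) : L z ∈ K := by
  obtain ⟨A, B, hAB⟩ := hL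
  have interpolation : L z = L x + (z - x) / (y - x) * (L y - L x) := by
    have := sub_ne_zero.2 hxy.symm
    simp only [hAB]
    field_simp
    ring
  rw [interpolation]
  exact add_mem hLx (mul_mem (div_mem (sub_mem hz hx) (sub_mem hy hx)) (sub_mem hLy hLx))

namespace NParams3

variable {n1 n2 n3 : ℕ} (p : NParams3 n1 n2 n3)

theorem fn_isReLU3 : IsReLU3 n1 n2 n3 p.fn :=
  ⟨fun _ => 1, p.b1, p.a2, p.s2, p.b2, p.a3, p.s3, p.b3, p.a4, p.c4, p.b4, fun t => by
    simp only [one_mul, fn]⟩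

/-- The preactivation of the `j`-th unit of the second hidden layer. -/
noncomputable def pre2 (j : Fin n2) (t : ℝ) : ℝ :=
  (∑ k, p.a2 j k * relu (t + p.b1 k)) + p.s2 j * t + p.b2 j

/-- The preactivation of the `r`-th unit of the third hidden layer. -/
noncomputable def pre3 (r : Fin n3) (t : ℝ) : ℝ :=
  (∑ j, p.a3 r j * relu (p.pre2 j t)) + p.s3 r * t + p.b3 r

theorem fn_eq_sum_pre3 (t : ℝ) :
    p.fn t = p.c4 * t + p.b4 + ∑ r, p.a4 r * relu (p.pre3 r t) := rfl

theorem fn_mem {S : Type*} [SetLike S ℝ] [SubringClass S ℝ] {K : S} (hp : p.valid)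
    (hK : ∀ i, p.get i ∈ K) {t : ℝ} (ht : t ∈ K) : p.fn t ∈ K := by
  have h2 (j : Fin n2) : p.pre2 j t ∈ K :=
    add_mem (add_mem (sum_mem fun k _ => mul_mem (hK (.a2 j k)) <|
      relu_mem (add_mem ht (hK (.b1 k)))) (mul_mem (sign_mem (hp.1 j)) ht)) (hK (.b2 j))
  have h3 (r : Fin n3) : p.pre3 r t ∈ K :=
    add_mem (add_mem (sum_mem fun j _ => mul_mem (hK (.a3 r j)) <|
      relu_mem (h2 j)) (mul_mem (sign_mem (hp.2 r)) ht)) (hK (.b3 r))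
  exact add_mem (add_mem (mul_mem (hK .c4) ht) (hK .b4)) <|
    sum_mem fun r _ => mul_mem (hK (.a4 r)) (relu_mem (h3 r))

variable (e1 : Finset (Fin n1)) (e2 : Finset (Fin n2)) (e3 : Finset (Fin n3))

/-- The affine function that `pre2 j` agrees with where the first layer has active set `e1`. -/
noncomputable def pre2Piece (j : Fin n2) (t : ℝ) : ℝ :=
  (∑ k ∈ e1, p.a2 j k * (t + p.b1 k)) + p.s2 j * t + p.b2 j

/-- The affine function that `pre3 r` agrees with where the first two layers have active sets
`e1` and `e2`. -/
noncomputable def pre3Piece (r : Fin n3) (t : ℝ) : ℝ :=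
  (∑ j ∈ e2, p.a3 r j * p.pre2Piece e1 j t) + p.s3 r * t + p.b3 r

/-- The affine function that `fn` agrees with where the three layers have active sets
`e1`, `e2` and `e3`. -/
noncomputable def fnPiece (t : ℝ) : ℝ :=
  (∑ r ∈ e3, p.a4 r * p.pre3Piece e1 e2 r t) + p.c4 * t + p.b4

theorem isAffine_fnPiece : IsAffine (p.fnPiece e1 e2 e3) :=
  isAffine_sum_mul_add _ _ (fun _ => isAffine_sum_mul_add _ _ (fun _ =>
    isAffine_sum_mul_add _ _ (fun k => ⟨1, p.b1 k, fun t => by rw [one_mul]⟩) _ _) _ _) _ _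

/-- At input `t` the active units of the three hidden layers are exactly `e1`, `e2` and `e3`, and
no preactivation vanishes. -/
structure HasPattern (t : ℝ) : Prop where
  layer1 : HasActiveSet e1 fun k => t + p.b1 k
  layer2 : HasActiveSet e2 fun j => p.pre2 j t
  layer3 : HasActiveSet e3 fun r => p.pre3 r t

/-- The network with the sign vectors of `p` and the real parameters `v`, used to perturb the real
parameters of `p`. -/
def replace (v : PIdx3 n1 n2 n3 → ℝ) : NParams3 n1 n2 n3 where
  c4 := v .c4
  b4 := v .b4
  a4 r := v (.a4 r)
  a3 r j := v (.a3 r j)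
  a2 j k := v (.a2 j k)
  b1 k := v (.b1 k)
  b2 j := v (.b2 j)
  b3 r := v (.b3 r)
  s2 := p.s2
  s3 := p.s3

theorem get_replace (v : PIdx3 n1 n2 n3 → ℝ) : (p.replace v).get = v := by
  ext i
  cases i <;> rfl

theorem isOpen_setOf_replace_hasPattern :
    IsOpen {x : (PIdx3 n1 n2 n3 → ℝ) × ℝ | (p.replace x.1).HasPattern e1 e2 e3 x.2} := by
  have h1 (k : Fin n1) : Continuous fun x : (PIdx3 n1 n2 n3 → ℝ) × ℝ =>
      x.2 + (p.replace x.1).b1 k := by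
    unfold replace; fun_prop
  have h2 (j : Fin n2) : Continuous fun x : (PIdx3 n1 n2 n3 → ℝ) × ℝ =>
      (p.replace x.1).pre2 j x.2 := by
    unfold pre2 replace; fun_prop
  have h3 (r : Fin n3) : Continuous fun x : (PIdx3 n1 n2 n3 → ℝ) × ℝ =>
      (p.replace x.1).pre3 r x.2 := by
    unfold pre3 pre2 replace; fun_prop
  convert (isOpen_setOf_hasActiveSet e1 h1).inter
    ((isOpen_setOf_hasActiveSet e2 h2).inter (isOpen_setOf_hasActiveSet e3 h3)) using 1
  ext x
  exact ⟨fun h => ⟨h.layer1, h.layer2, h.layer3⟩, fun h => ⟨h.1, h.2.1, h.2.2⟩⟩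

theorem isOpen_setOf_hasPattern : IsOpen {t | p.HasPattern e1 e2 e3 t} :=
  (p.isOpen_setOf_replace_hasPattern e1 e2 e3).preimage (Continuous.prodMk_right p.get)

variable {p e1 e2 e3}

theorem HasPattern.fn_eq {t : ℝ} (h : p.HasPattern e1 e2 e3 t) :
    p.fn t = p.fnPiece e1 e2 e3 t := by
  have h2 (j : Fin n2) : p.pre2 j t = p.pre2Piece e1 j t := by
    rw [pre2, pre2Piece, h.layer1.sum_mul_relu]
  have h3 (r : Fin n3) : p.pre3 r t = p.pre3Piece e1 e2 r t := by
    rw [pre3, pre3Piece, h.layer2.sum_mul_relu, Finset.sum_congr rfl fun j _ => by rw [h2]]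
  rw [fn_eq_sum_pre3, fnPiece, h.layer3.sum_mul_relu, Finset.sum_congr rfl fun r _ => by rw [h3]]
  ring

theorem HasPattern.fnPiece_mem {S : Type*} [SetLike S ℝ] [SubfieldClass S ℝ] {K : S} {t : ℝ}
    (h : p.HasPattern e1 e2 e3 t) (hK : ∀ q : ℚ, p.fn q ∈ K) (q : ℚ) :
    p.fnPiece e1 e2 e3 q ∈ K := by
  obtain ⟨a, b, ⟨hat, htb⟩, hsub⟩ := mem_nhds_iff_exists_Ioo_subset.1 <|
    (p.isOpen_setOf_hasPattern e1 e2 e3).mem_nhds h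
  obtain ⟨x, hax, hxt⟩ := exists_rat_btwn hat
  obtain ⟨y, hty, hyb⟩ := exists_rat_btwn htb
  have hx : p.HasPattern e1 e2 e3 x := hsub ⟨hax, hxt.trans htb⟩
  have hy : p.HasPattern e1 e2 e3 y := hsub ⟨hat.trans hty, hyb⟩
  exact (p.isAffine_fnPiece e1 e2 e3).apply_mem (SubfieldClass.ratCast_mem K x)
    (SubfieldClass.ratCast_mem K y) (SubfieldClass.ratCast_mem K q) (hxt.trans hty).ne
    (hx.fn_eq ▸ hK x) (hy.fn_eq ▸ hK y)

theorem pre2Piece_insert {k : Fin n1} (hk : k ∉ e1) (j : Fin n2) (t : ℝ) :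
    p.pre2Piece (insert k e1) j t = p.a2 j k * (t + p.b1 k) + p.pre2Piece e1 j t := by
  rw [pre2Piece, pre2Piece, Finset.sum_insert hk]
  ring

theorem pre3Piece_insert {j : Fin n2} (hj : j ∉ e2) (r : Fin n3) (t : ℝ) :
    p.pre3Piece e1 (insert j e2) r t =
      p.a3 r j * p.pre2Piece e1 j t + p.pre3Piece e1 e2 r t := by
  rw [pre3Piece, pre3Piece, Finset.sum_insert hj]
  ring

theorem fnPiece_insert {r : Fin n3} (hr : r ∉ e3) (t : ℝ) :
    p.fnPiece e1 e2 (insert r e3) t =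
      p.a4 r * p.pre3Piece e1 e2 r t + p.fnPiece e1 e2 e3 t := by
  rw [fnPiece, fnPiece, Finset.sum_insert hr]
  ring

theorem fnPiece_univ_insert {j : Fin n2} (hj : j ∉ e2) (t : ℝ) :
    p.fnPiece e1 (insert j e2) Finset.univ t =
      (∑ r, p.a4 r * p.a3 r j) * p.pre2Piece e1 j t + p.fnPiece e1 e2 Finset.univ t := by
  simp only [fnPiece, pre3Piece_insert hj, mul_add, Finset.sum_add_distrib, Finset.sum_mul,
    mul_assoc]
  ring

end NParams3

/-- The set of the first `m` of `n` units. -/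
def initial (n m : ℕ) : Finset (Fin n) := {k | (k : ℕ) < m}

@[simp]
theorem mem_initial {n m : ℕ} {k : Fin n} : k ∈ initial n m ↔ (k : ℕ) < m := by simp [initial]

theorem notMem_initial_self {n : ℕ} (k : Fin n) : k ∉ initial n k := by simp

theorem insert_initial {n : ℕ} (k : Fin n) : insert k (initial n k) = initial n (k + 1) := by
  ext i
  simp only [Finset.mem_insert, mem_initial, Fin.ext_iff]
  lia

@[simp]
theorem initial_zero (n : ℕ) : initial n 0 = ∅ := by ext; simp

@[simp]
theorem initial_self (n : ℕ) : initial n n = Finset.univ := by ext; simp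

namespace NParams3

variable {n1 n2 n3 : ℕ} {p : NParams3 n1 n2 n3} {S : Type*} [SetLike S ℝ]
  [SubfieldClass S ℝ] {K : S}

/-- A network realizing enough activation patterns to determine its parameters, up to field
operations, from its values: units are ordered within each layer, and the sets of active units
run over initial segments. -/
structure Identifiable (p : NParams3 n1 n2 n3) : Prop where
  s2_eq (j : Fin n2) : p.s2 j = -1 ∨ p.s2 j = 1
  s3_eq (r : Fin n3) : p.s3 r = -1 ∨ p.s3 r = 1
  a4_ne (r : Fin n3) : p.a4 r ≠ 0
  a3_ne (r : Fin n3) (j : Fin n2) : p.a3 r j ≠ 0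
  a2_ne (j : Fin n2) (k : Fin n1) : p.a2 j k ≠ 0
  sum_a4_mul_a3_ne (j : Fin n2) : ∑ r, p.a4 r * p.a3 r j ≠ 0
  exists_hasPattern {κ ι ρ : ℕ} (hκ : κ ≤ n1) (hι : ι ≤ n2) (hρ : ρ ≤ n3) (h : κ = 0 ∨ ρ = n3) :
    ∃ t, p.HasPattern (initial n1 κ) (initial n2 ι) (initial n3 ρ) t

namespace Identifiable

theorem valid (h : p.Identifiable) : p.valid :=
  ⟨fun j => (h.s2_eq j).imp_right .inr, fun r => (h.s3_eq r).imp_right .inr⟩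

theorem s2_ne_zero (h : p.Identifiable) (j : Fin n2) : p.s2 j ≠ 0 := by
  rcases h.s2_eq j with hs | hs <;> simp [hs]

theorem s3_ne_zero (h : p.Identifiable) (r : Fin n3) : p.s3 r ≠ 0 := by
  rcases h.s3_eq r with hs | hs <;> simp [hs]

theorem fnPiece_mem (h : p.Identifiable) (hK : ∀ q : ℚ, p.fn q ∈ K) {κ ι ρ : ℕ}
    (hκ : κ ≤ n1) (hι : ι ≤ n2) (hρ : ρ ≤ n3) (hκρ : κ = 0 ∨ ρ = n3) (q : ℚ) :
    p.fnPiece (initial n1 κ) (initial n2 ι) (initial n3 ρ) q ∈ K :=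
  have ⟨_, ht⟩ := h.exists_hasPattern hκ hι hρ hκρ
  ht.fnPiece_mem hK q

theorem c4_mem_and_b4_mem (h : p.Identifiable) (hK : ∀ q : ℚ, p.fn q ∈ K) :
    p.c4 ∈ K ∧ p.b4 ∈ K := by
  have hpiece (q : ℚ) : p.c4 * q + p.b4 ∈ K := by
    simpa [fnPiece] using h.fnPiece_mem hK n1.zero_le n2.zero_le n3.zero_le (.inl rfl) q
  have hb4 : p.b4 ∈ K := by simpa using hpiece 0
  exact ⟨by simpa using sub_mem (hpiece 1) hb4, hb4⟩

theorem a4_mul_pre3Piece_mem (h : p.Identifiable) (hK : ∀ q : ℚ, p.fn q ∈ K) {ι : ℕ}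
    (hι : ι ≤ n2) (r : Fin n3) (q : ℚ) : p.a4 r * p.pre3Piece ∅ (initial n2 ι) r q ∈ K := by
  have hdiff := sub_mem (h.fnPiece_mem hK n1.zero_le hι r.2 (.inl rfl) q)
    (h.fnPiece_mem hK n1.zero_le hι r.2.le (.inl rfl) q)
  rwa [Nat.succ_eq_add_one, ← insert_initial, fnPiece_insert (notMem_initial_self r),
    add_sub_cancel_right, initial_zero] at hdiff

theorem a4_mem (h : p.Identifiable) (hK : ∀ q : ℚ, p.fn q ∈ K) (r : Fin n3) : p.a4 r ∈ K := by
  refine mem_of_forall_mul_affine_mem (b := p.b3 r) (sign_mem (h.valid.2 r))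
    (h.s3_ne_zero r) fun q => ?_
  simpa [pre3Piece] using h.a4_mul_pre3Piece_mem hK n2.zero_le r q

theorem pre3Piece_mem (h : p.Identifiable) (hK : ∀ q : ℚ, p.fn q ∈ K) {ι : ℕ}
    (hι : ι ≤ n2) (r : Fin n3) (q : ℚ) : p.pre3Piece ∅ (initial n2 ι) r q ∈ K :=
  mem_of_mul_mem_left (h.a4_mem hK r) (h.a4_ne r) (h.a4_mul_pre3Piece_mem hK hι r q)

theorem b3_mem (h : p.Identifiable) (hK : ∀ q : ℚ, p.fn q ∈ K) (r : Fin n3) : p.b3 r ∈ K := by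
  simpa [pre3Piece] using h.pre3Piece_mem hK n2.zero_le r 0

theorem a3_mem (h : p.Identifiable) (hK : ∀ q : ℚ, p.fn q ∈ K) (r : Fin n3) (j : Fin n2) :
    p.a3 r j ∈ K := by
  refine mem_of_forall_mul_affine_mem (b := p.b2 j) (sign_mem (h.valid.1 j))
    (h.s2_ne_zero j) fun q => ?_
  have hdiff := sub_mem (h.pre3Piece_mem hK j.2 r q) (h.pre3Piece_mem hK j.2.le r q)
  rw [Nat.succ_eq_add_one, ← insert_initial, pre3Piece_insert (notMem_initial_self j),
    add_sub_cancel_right] at hdiff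
  simpa [pre2Piece] using hdiff

theorem pre2Piece_mem (h : p.Identifiable) (hK : ∀ q : ℚ, p.fn q ∈ K) {κ : ℕ} (hκ : κ ≤ n1)
    (j : Fin n2) (q : ℚ) : p.pre2Piece (initial n1 κ) j q ∈ K := by
  have hdiff := sub_mem (h.fnPiece_mem hK hκ j.2 le_rfl (.inr rfl) q)
    (h.fnPiece_mem hK hκ j.2.le le_rfl (.inr rfl) q)
  rw [Nat.succ_eq_add_one, ← insert_initial, initial_self,
    fnPiece_univ_insert (notMem_initial_self j), add_sub_cancel_right] at hdiff
  have hsum : ∑ r, p.a4 r * p.a3 r j ∈ K :=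
    sum_mem fun r _ => mul_mem (h.a4_mem hK r) (h.a3_mem hK r j)
  exact mem_of_mul_mem_left hsum (h.sum_a4_mul_a3_ne j) hdiff

theorem b2_mem (h : p.Identifiable) (hK : ∀ q : ℚ, p.fn q ∈ K) (j : Fin n2) : p.b2 j ∈ K := by
  simpa [pre2Piece] using h.pre2Piece_mem hK n1.zero_le j 0

theorem a2_mul_mem (h : p.Identifiable) (hK : ∀ q : ℚ, p.fn q ∈ K) (j : Fin n2) (k : Fin n1)
    (q : ℚ) : p.a2 j k * (q + p.b1 k) ∈ K := by
  have hdiff := sub_mem (h.pre2Piece_mem hK k.2 j q) (h.pre2Piece_mem hK k.2.le j q)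
  rwa [Nat.succ_eq_add_one, ← insert_initial, pre2Piece_insert (notMem_initial_self k),
    add_sub_cancel_right] at hdiff

theorem a2_mem (h : p.Identifiable) (hK : ∀ q : ℚ, p.fn q ∈ K) (j : Fin n2) (k : Fin n1) :
    p.a2 j k ∈ K :=
  mem_of_forall_mul_affine_mem (b := p.b1 k) (one_mem K) one_ne_zero fun q => by
    simpa using h.a2_mul_mem hK j k q

theorem b1_mem (h : p.Identifiable) (hK : ∀ q : ℚ, p.fn q ∈ K) (j : Fin n2) (k : Fin n1) :
    p.b1 k ∈ K :=
  mem_of_mul_mem_left (h.a2_mem hK j k) (h.a2_ne j k) (by simpa using h.a2_mul_mem hK j k 0)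

theorem get_mem [NeZero n2] (h : p.Identifiable) (hK : ∀ q : ℚ, p.fn q ∈ K) :
    ∀ i, p.get i ∈ K
  | .c4 => (h.c4_mem_and_b4_mem hK).1
  | .b4 => (h.c4_mem_and_b4_mem hK).2
  | .a4 r => h.a4_mem hK r
  | .a3 r j => h.a3_mem hK r j
  | .a2 j k => h.a2_mem hK j k
  | .b1 k => h.b1_mem hK 0 k
  | .b2 j => h.b2_mem hK j
  | .b3 r => h.b3_mem hK r

theorem eventually_replace (h : p.Identifiable) : ∀ᶠ v in 𝓝 p.get, (p.replace v).Identifiable := by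
  have ne {f : (PIdx3 n1 n2 n3 → ℝ) → ℝ} (hf : Continuous f) (h0 : f p.get ≠ 0) :
      ∀ᶠ v in 𝓝 p.get, f v ≠ 0 := hf.continuousAt.eventually_ne h0
  have ha4 : ∀ᶠ v in 𝓝 p.get, ∀ r, (p.replace v).a4 r ≠ 0 :=
    eventually_all.2 fun r => ne (continuous_apply _) (h.a4_ne r)
  have ha3 : ∀ᶠ v in 𝓝 p.get, ∀ r j, (p.replace v).a3 r j ≠ 0 :=
    eventually_all.2 fun r => eventually_all.2 fun j => ne (continuous_apply _) (h.a3_ne r j)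
  have ha2 : ∀ᶠ v in 𝓝 p.get, ∀ j k, (p.replace v).a2 j k ≠ 0 :=
    eventually_all.2 fun j => eventually_all.2 fun k => ne (continuous_apply _) (h.a2_ne j k)
  have hsum : ∀ᶠ v in 𝓝 p.get, ∀ j, ∑ r, (p.replace v).a4 r * (p.replace v).a3 r j ≠ 0 :=
    eventually_all.2 fun j => ne (by unfold replace; fun_prop) (h.sum_a4_mul_a3_ne j)
  have hpat : ∀ᶠ v in 𝓝 p.get, ∀ κ ≤ n1, ∀ ι ≤ n2, ∀ ρ ≤ n3, κ = 0 ∨ ρ = n3 →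
      ∃ t, (p.replace v).HasPattern (initial n1 κ) (initial n2 ι) (initial n3 ρ) t := by
    refine (finite_Iic n1).eventually_all.2 fun κ hκ => (finite_Iic n2).eventually_all.2 fun ι hι =>
      (finite_Iic n3).eventually_all.2 fun ρ hρ => eventually_all.2 fun hκρ => ?_
    obtain ⟨t, ht⟩ := h.exists_hasPattern hκ hι hρ hκρ
    have hopen := (p.isOpen_setOf_replace_hasPattern (initial n1 κ) (initial n2 ι)
      (initial n3 ρ)).preimage (Continuous.prodMk_left t)
    exact (hopen.eventually_mem ht).mono fun v hv => ⟨t, hv⟩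
  filter_upwards [ha4, ha3, ha2, hsum, hpat] with v ha4 ha3 ha2 hsum hpat
  exact ⟨h.s2_eq, h.s3_eq, ha4, ha3, ha2, hsum, fun hκ hι hρ => hpat _ hκ _ hι _ hρ⟩

end Identifiable

end NParams3

theorem sum_initial_zigzag {n m : ℕ} (hm : m ≤ n) (d x : ℝ) :
    ∑ k ∈ initial n m, 2 * (-1) ^ (k : ℕ) * (x - 2 * d * k) =
      x + d - (-1) ^ m * (x - d * (2 * m - 1)) := by
  induction m with
  | zero => simp
  | succ m ih =>
    rw [← insert_initial ⟨m, hm⟩, Finset.sum_insert (notMem_initial_self _), ih (by lia)]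
    push_cast
    ring

/-- The point `x` of the `m`-th linear piece of the zigzag
`x ↦ ∑ k, 2 * (-1) ^ k * relu (x - 2 * d * k)` at which the zigzag takes the value `x + d + y`. -/
noncomputable def zigzagPoint (d : ℝ) (m : ℕ) (y : ℝ) : ℝ := d * (2 * m - 1) - (-1) ^ m * y

theorem zigzagPoint_mem_Ioo {d y : ℝ} (hy : |y| < d) (m : ℕ) :
    zigzagPoint d m y ∈ Ioo (2 * d * (m - 1)) (2 * d * m) := by
  have := abs_lt.1 hy
  rcases neg_one_pow_eq_or ℝ m with h | h <;> simp only [zigzagPoint, h, mem_Ioo] <;>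
    constructor <;> linarith

theorem hasActiveSet_zigzagPoint {d y : ℝ} (hy : |y| < d) (n m : ℕ) :
    HasActiveSet (initial n m) fun k : Fin n => zigzagPoint d m y - 2 * d * k := by
  have hd : 0 ≤ 2 * d := by linarith [abs_nonneg y]
  obtain ⟨hlt, hgt⟩ := zigzagPoint_mem_Ioo hy m
  refine ⟨fun k hk => ?_, fun k hk => ?_⟩
  · have hkm : (k : ℝ) ≤ m - 1 := le_sub_iff_add_le.2 (mod_cast mem_initial.1 hk)
    linarith [mul_le_mul_of_nonneg_left hkm hd]
  · have hmk : (m : ℝ) ≤ k := mod_cast not_lt.1 (mem_initial.not.1 hk)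
    linarith [mul_le_mul_of_nonneg_left hmk hd]

theorem sum_relu_zigzagPoint {d y : ℝ} (hy : |y| < d) {n m : ℕ} (hm : m ≤ n) :
    ∑ k : Fin n, 2 * (-1) ^ (k : ℕ) * relu (zigzagPoint d m y - 2 * d * k) =
      zigzagPoint d m y + d + y := by
  rw [(hasActiveSet_zigzagPoint hy n m).sum_mul_relu, sum_initial_zigzag hm]
  have hsq : ((-1 : ℝ) ^ m) * (-1) ^ m = 1 := by rw [← mul_pow]; simp
  rw [zigzagPoint]
  linear_combination y * hsq

theorem add_zigzagPoint_zero (d y : ℝ) : d + y + zigzagPoint d 0 y = 0 := by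
  rw [zigzagPoint]
  ring

theorem add_zigzagPoint_nonneg {d y : ℝ} (hy : |y| < d) (m : ℕ) :
    0 ≤ d + y + zigzagPoint d m y := by
  obtain rfl | hm := m.eq_zero_or_pos
  · rw [add_zigzagPoint_zero]
  · have hd : 0 ≤ 2 * d := by linarith [abs_nonneg y]
    have hm1 : (0 : ℝ) ≤ m - 1 := sub_nonneg.2 (mod_cast hm)
    linarith [(zigzagPoint_mem_Ioo hy m).1, neg_lt_of_abs_lt hy, mul_nonneg hd hm1]

theorem abs_zigzagPoint_add_sub_lt {d e y : ℝ} {n m : ℕ} (hy : |y| < d) (hm : m ≤ n)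
    (he : d * (n + 1) ≤ e) : |zigzagPoint d m y + 2 * d - e| < e := by
  obtain ⟨hlt, hgt⟩ := zigzagPoint_mem_Ioo hy m
  have hd : 0 ≤ d := (abs_nonneg y).trans hy.le
  have h0 : 0 ≤ d * m := by positivity
  have hmn : d * m ≤ d * n := by gcongr
  rw [abs_lt]
  constructor <;> linarith

theorem hasActiveSet_add_sub_half {n m : ℕ} {c : ℝ} (hc : 0 ≤ c) (hcm : c = 0 ∨ m = n) :
    HasActiveSet (initial n m) fun r : Fin n => c + (m - 1 / 2 - r) := by
  refine ⟨fun r hr => ?_, fun r hr => ?_⟩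
  · have hrm : (r : ℝ) ≤ m - 1 := le_sub_iff_add_le.2 (mod_cast mem_initial.1 hr)
    linarith
  · obtain rfl | rfl := hcm
    · have hmr : (m : ℝ) ≤ r := mod_cast not_lt.1 (mem_initial.not.1 hr)
      linarith
    · exact absurd (mem_initial.2 r.2) hr

/-- A network in which all units of the second layer see the same zigzag of the first layer, with
breakpoints `2 * e` apart, and all units of the third layer see the same zigzag of the second,
with breakpoints `2 * d` apart. The biases stagger the units within each layer, so that they become
active one after another. -/
def zigzagNet (n1 n2 n3 : ℕ) (d e : ℝ) : NParams3 n1 n2 n3 where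
  c4 := 0
  b4 := 0
  a4 _ := 1
  a3 _ j := 2 * (-1) ^ (j : ℕ)
  a2 _ k := 2 * (-1) ^ (k : ℕ)
  b1 k := -(2 * d + 2 * e * k)
  b2 j := -(2 * d * j)
  b3 r := -(d + r)
  s2 _ := -1
  s3 _ := 1

namespace zigzagNet

variable {n1 n2 n3 κ ι ρ : ℕ} {d e y t : ℝ}

theorem add_b1_eq (x : ℝ) (k : Fin n1) :
    x + 2 * d + (zigzagNet n1 n2 n3 d e).b1 k = x - 2 * e * k := by
  rw [zigzagNet]
  ring

theorem pre2_eq (hy : |y| < e) (hκ : κ ≤ n1) (j : Fin n2) :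
    (zigzagNet n1 n2 n3 d e).pre2 j (zigzagPoint e κ y + 2 * d) = y + e - 2 * d - 2 * d * j := by
  simp only [NParams3.pre2, add_b1_eq]
  simp only [zigzagNet, sum_relu_zigzagPoint hy hκ]
  ring

theorem pre3_eq (hy : |y| < d) (hι : ι ≤ n2)
    (h2 : ∀ j, (zigzagNet n1 n2 n3 d e).pre2 j t = zigzagPoint d ι y - 2 * d * j) (r : Fin n3) :
    (zigzagNet n1 n2 n3 d e).pre3 r t = zigzagPoint d ι y + y + t - r := by
  simp only [NParams3.pre3, h2]
  simp only [zigzagNet, sum_relu_zigzagPoint hy hι]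
  ring

theorem exists_hasPattern (hd : n3 + 1 ≤ d) (he : d * (n2 + 1) ≤ e) (hκ : κ ≤ n1)
    (hι : ι ≤ n2) (hρ : ρ ≤ n3) (hκρ : κ = 0 ∨ ρ = n3) :
    ∃ t, (zigzagNet n1 n2 n3 d e).HasPattern (initial n1 κ) (initial n2 ι) (initial n3 ρ) t := by
  -- `y₂` selects `ρ`; `y₁` makes the second layer read the first-layer zigzag as `x₂`, which
  -- selects `ι`; and `x₁ + 2 * d` is the input on the `κ`-th linear piece with that reading.
  let y₂ : ℝ := ρ - 1 / 2
  let x₂ := zigzagPoint d ι y₂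
  let y₁ := x₂ + 2 * d - e
  let x₁ := zigzagPoint e κ y₁
  have hy₂ : |(ρ : ℝ) - 1 / 2| < d := by
    have hρ' : (ρ : ℝ) ≤ n3 := mod_cast hρ
    rw [abs_lt]
    constructor <;> linarith [(ρ.cast_nonneg : (0 : ℝ) ≤ ρ)]
  have hy₁ : |y₁| < e := abs_zigzagPoint_add_sub_lt hy₂ hι he
  have layer2 (j : Fin n2) :
      (zigzagNet n1 n2 n3 d e).pre2 j (x₁ + 2 * d) = x₂ - 2 * d * j := by
    rw [pre2_eq hy₁ hκ]
    ring
  have layer3 (r : Fin n3) :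
      (zigzagNet n1 n2 n3 d e).pre3 r (x₁ + 2 * d) = e + y₁ + x₁ + (ρ - 1 / 2 - r) := by
    rw [pre3_eq hy₂ hι layer2]
    ring
  refine ⟨x₁ + 2 * d, ?_, ?_, ?_⟩
  · simpa only [add_b1_eq] using hasActiveSet_zigzagPoint hy₁ n1 κ
  · simpa only [layer2] using hasActiveSet_zigzagPoint hy₂ n2 ι
  · simp only [layer3]
    refine hasActiveSet_add_sub_half (add_zigzagPoint_nonneg hy₁ κ) (hκρ.imp_left ?_)
    rintro rfl
    exact add_zigzagPoint_zero e y₁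

theorem identifiable (hn3 : n3 ≠ 0) (hd : n3 + 1 ≤ d) (he : d * (n2 + 1) ≤ e) :
    (zigzagNet n1 n2 n3 d e).Identifiable where
  s2_eq _ := .inl rfl
  s3_eq _ := .inr rfl
  a4_ne _ := one_ne_zero
  a3_ne _ _ := by simp [zigzagNet]
  a2_ne _ _ := by simp [zigzagNet]
  sum_a4_mul_a3_ne _ := by simp [zigzagNet, hn3]
  exists_hasPattern := exists_hasPattern hd he

end zigzagNet

instance (n1 n2 n3 : ℕ) : Finite (PIdx3 n1 n2 n3) := by
  refine finite_univ_iff.1 <| (toFinite <| {.c4, .b4} ∪ range .a4 ∪ range (Function.uncurry .a3) ∪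
    range (Function.uncurry .a2) ∪ range .b1 ∪ range .b2 ∪ range .b3).subset fun i _ => ?_
  cases i <;> simp

theorem exists_identifiable_algebraicIndependent {n3 : ℕ} (n1 n2 : ℕ) (hn3 : n3 ≠ 0) :
    ∃ p : NParams3 n1 n2 n3, p.Identifiable ∧ AlgebraicIndependent ℚ p.get := by
  have hnet : (zigzagNet n1 n2 n3 (n3 + 1) ((n3 + 1) * (n2 + 1))).Identifiable :=
    zigzagNet.identifiable hn3 le_rfl le_rfl
  obtain ⟨v, hvalg, hv⟩ :=
    (dense_algebraicIndependent ℚ (PIdx3 n1 n2 n3)).inter_nhds_nonempty hnet.eventually_replace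
  exact ⟨_, hv, by rwa [NParams3.get_replace]⟩

theorem NParams3.Identifiable.algebraicIndependent_get_of_fn_eq {n1 n2 n3 : ℕ} [NeZero n2]
    {p p' : NParams3 n1 n2 n3} (hp : p.Identifiable) (hp_alg : AlgebraicIndependent ℚ p.get)
    (hp' : p'.valid) (h : p'.fn = p.fn) : AlgebraicIndependent ℚ p'.get := by
  refine algebraicIndependent_of_mem_adjoin hp_alg (hp.get_mem fun q => ?_)
  rw [← h]
  exact p'.fn_mem hp' (fun i => IntermediateField.subset_adjoin ℚ _ (mem_range_self i))
    (SubfieldClass.ratCast_mem _ q)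

/-- (i) every `f₄ ∈ Y_{n₁,n₂,n₃}` admits the normalized representation,
and (ii) the real parameters of the normalized model are independent: fixing any one of
them to be zero yields a proper subclass of `Y_{n₁,n₂,n₃}`. -/
theorem three_layer_parameter_independence (n1 n2 n3 : ℕ)
    (hn1 : 1 ≤ n1) (hn2 : 1 ≤ n2) (hn3 : 1 ≤ n3) :
    (∀ f : ℝ → ℝ, IsReLU3 n1 n2 n3 f →
      ∃ p : NParams3 n1 n2 n3, p.valid ∧ ∀ t, f t = p.fn t) ∧
    (∀ (i : PIdx3 n1 n2 n3),
      {f : ℝ → ℝ | ∃ p : NParams3 n1 n2 n3, p.valid ∧ p.get i = 0 ∧ ∀ t, f t = p.fn t}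
        ⊂ {f : ℝ → ℝ | IsReLU3 n1 n2 n3 f}) := by
  refine ⟨fun f hf => hf.exists_valid_eq_fn, fun i => (ssubset_iff_of_subset ?_).2 ?_⟩
  · rintro f ⟨p, -, -, hf⟩
    exact funext hf ▸ p.fn_isReLU3
  · have : NeZero n2 := ⟨Nat.one_le_iff_ne_zero.1 hn2⟩
    obtain ⟨p, hp, hp_alg⟩ :=
      exists_identifiable_algebraicIndependent n1 n2 (Nat.one_le_iff_ne_zero.1 hn3)
    refine ⟨p.fn, p.fn_isReLU3, ?_⟩
    rintro ⟨p', hp', hi, hfn⟩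
    exact (hp.algebraicIndependent_get_of_fn_eq hp_alg hp' (funext hfn).symm).ne_zero i hi
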